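/- For every α ∈ (0,1], every γ > 0, every s ∈ ℝ, and every sequence w : ℤ → ℂ with w₀ = 0, one has Σ_{k ∈ ℤ} ⟨k⟩^{2(s+1)} |w_k|² / (γ² + α²k⁶) ≤ 2 α^{−2/3} γ^{−4/3} Σ_{k ∈ ℤ} ⟨k⟩^{2s} |w_k|². Equivalently, the Fourier multiplier operator M₂ : w_k ↦ w_k/(γ − iαk³) satisfies ‖M₂ w‖_{H^{s+1}} ≤ √2 · α^{−1/3} γ^{−2/3} ‖w‖_{H^s} on mean-zero sequences. -/

import Mathlib

/-- The Japanese bracket `⟨x⟩ = (1 + x²)^{1/2}`. -/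
noncomputable def jb (x : ℝ) : ℝ := Real.sqrt (1 + x^2)

/-!
The exponents of `α` and `γ` come from the weighted AM-GM inequality with weights `1/3` and `2/3`,
applied to the two terms of the denominator: `(α²x⁶)^{1/3} (γ²)^{2/3} ≤ α²x⁶ + γ²`. A nonzero
frequency satisfies `⟨k⟩² ≤ 2k²`, which is the origin of the factor `2`.
-/

lemma jb_pos (x : ℝ) : 0 < jb x :=
  Real.sqrt_pos.mpr (by positivity)

lemma jb_sq (x : ℝ) : jb x ^ 2 = 1 + x ^ 2 :=
  Real.sq_sqrt (by positivity)

lemma jb_sq_le_two_mul_sq {x : ℝ} (hx : 1 ≤ |x|) : jb x ^ 2 ≤ 2 * x ^ 2 := by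
  have one_le_sq : 1 ≤ x ^ 2 := (one_le_sq_iff_one_le_abs x).mpr hx
  rw [jb_sq]
  linarith

lemma jb_rpow_two_mul_add_one (x s : ℝ) : jb x ^ (2 * (s + 1)) = jb x ^ (2 * s) * jb x ^ 2 := by
  rw [mul_add, mul_one, Real.rpow_add (jb_pos x), Real.rpow_two]

lemma rpow_mul_rpow_le_add {a b p q : ℝ} (ha : 0 ≤ a) (hb : 0 ≤ b) (hp : 0 ≤ p) (hq : 0 ≤ q)
    (hpq : p + q = 1) : a ^ p * b ^ q ≤ a + b :=
  calc a ^ p * b ^ q ≤ p * a + q * b :=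
        Real.geom_mean_le_arith_mean2_weighted hp hq ha hb hpq
    _ ≤ a + b :=
        add_le_add (mul_le_of_le_one_left ha (by linarith)) (mul_le_of_le_one_left hb (by linarith))

lemma rpow_two_thirds_mul_rpow_four_thirds_mul_sq_le {α γ : ℝ} (hα : 0 ≤ α) (hγ : 0 ≤ γ) (x : ℝ) :
    α ^ (2 / 3 : ℝ) * γ ^ (4 / 3 : ℝ) * x ^ 2 ≤ γ ^ 2 + α ^ 2 * x ^ 6 := by
  have hα_root : (α ^ 2) ^ (1 / 3 : ℝ) = α ^ (2 / 3 : ℝ) := by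
    rw [← Real.rpow_natCast_mul hα]
    norm_num
  have hγ_root : (γ ^ 2) ^ (2 / 3 : ℝ) = γ ^ (4 / 3 : ℝ) := by
    rw [← Real.rpow_natCast_mul hγ]
    norm_num
  have hx_root : (x ^ 6) ^ (1 / 3 : ℝ) = x ^ 2 := by
    rw [show x ^ 6 = (x ^ 2) ^ 3 by ring, ← Real.rpow_natCast_mul (sq_nonneg x)]
    norm_num
  calc α ^ (2 / 3 : ℝ) * γ ^ (4 / 3 : ℝ) * x ^ 2
      = (γ ^ 2) ^ (2 / 3 : ℝ) * (α ^ 2 * x ^ 6) ^ (1 / 3 : ℝ) := by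
        rw [Real.mul_rpow (by positivity) (by positivity), hα_root, hγ_root, hx_root]
        ring
    _ ≤ γ ^ 2 + α ^ 2 * x ^ 6 :=
        rpow_mul_rpow_le_add (by positivity) (by positivity) (by norm_num) (by norm_num)
          (by norm_num)

lemma jb_sq_div_le {α γ x : ℝ} (hα : 0 < α) (hγ : 0 < γ) (hx : 1 ≤ |x|) :
    jb x ^ 2 / (γ ^ 2 + α ^ 2 * x ^ 6) ≤ 2 * α ^ (-(2 : ℝ) / 3) * γ ^ (-(4 : ℝ) / 3) := by
  rw [div_le_iff₀ (by positivity), neg_div, neg_div, Real.rpow_neg hα.le, Real.rpow_neg hγ.le]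
  calc jb x ^ 2 ≤ 2 * x ^ 2 := jb_sq_le_two_mul_sq hx
    _ = 2 * (α ^ (2 / 3 : ℝ))⁻¹ * (γ ^ (4 / 3 : ℝ))⁻¹ *
          (α ^ (2 / 3 : ℝ) * γ ^ (4 / 3 : ℝ) * x ^ 2) := by
        field_simp
    _ ≤ 2 * (α ^ (2 / 3 : ℝ))⁻¹ * (γ ^ (4 / 3 : ℝ))⁻¹ * (γ ^ 2 + α ^ 2 * x ^ 6) := by
        gcongr
        exact rpow_two_thirds_mul_rpow_four_thirds_mul_sq_le hα.le hγ.le x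

lemma summable_and_tsum_le_mul_tsum {ι : Type*} {f g : ι → ℝ} {C : ℝ} (hf : ∀ i, 0 ≤ f i)
    (hfg : ∀ i, f i ≤ C * g i) (hg : Summable g) :
    Summable f ∧ ∑' i, f i ≤ C * ∑' i, g i := by
  have hf_summable : Summable f := (hg.mul_left C).of_nonneg_of_le hf hfg
  exact ⟨hf_summable, hg.tsum_mul_left C ▸ hf_summable.tsum_le_tsum hfg (hg.mul_left C)⟩

theorem M2_gain_one_derivative_general {E : Type*} [SeminormedAddCommGroup E] (α γ s : ℝ)
    (hα : 0 < α) (hγ : 0 < γ) (w : ℤ → E) (h0 : w 0 = 0)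
    (hw : Summable (fun k : ℤ => jb (k : ℝ) ^ (2 * s) * ‖w k‖ ^ 2)) :
    Summable (fun k : ℤ =>
      jb (k : ℝ) ^ (2 * (s + 1)) * ‖w k‖ ^ 2 / (γ ^ 2 + α ^ 2 * (k : ℝ) ^ 6)) ∧
    (∑' k : ℤ, jb (k : ℝ) ^ (2 * (s + 1)) * ‖w k‖ ^ 2 / (γ ^ 2 + α ^ 2 * (k : ℝ) ^ 6))
      ≤ 2 * α ^ (-(2 : ℝ) / 3) * γ ^ (-(4 : ℝ) / 3) *
        ∑' k : ℤ, jb (k : ℝ) ^ (2 * s) * ‖w k‖ ^ 2 := by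
  have weight_nonneg (k : ℤ) (r : ℝ) : 0 ≤ jb k ^ r := Real.rpow_nonneg (jb_pos k).le r
  refine summable_and_tsum_le_mul_tsum (fun k => ?_) (fun k => ?_) hw
  · have := weight_nonneg k (2 * (s + 1))
    positivity
  rcases eq_or_ne k 0 with rfl | hk
  · simp [h0]
  have one_le_abs : 1 ≤ |(k : ℝ)| := mod_cast Int.one_le_abs hk
  calc jb (k : ℝ) ^ (2 * (s + 1)) * ‖w k‖ ^ 2 / (γ ^ 2 + α ^ 2 * (k : ℝ) ^ 6)
      = jb k ^ 2 / (γ ^ 2 + α ^ 2 * (k : ℝ) ^ 6) * (jb k ^ (2 * s) * ‖w k‖ ^ 2) := by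
        rw [jb_rpow_two_mul_add_one]
        ring
    _ ≤ 2 * α ^ (-(2 : ℝ) / 3) * γ ^ (-(4 : ℝ) / 3) * (jb k ^ (2 * s) * ‖w k‖ ^ 2) :=
        mul_le_mul_of_nonneg_right (jb_sq_div_le hα hγ one_le_abs)
          (mul_nonneg (weight_nonneg k _) (sq_nonneg _))

/-- For `α ∈ (0,1]`, `γ > 0`, `s ∈ ℝ`, and any mean-zero sequence `w : ℤ → ℂ`,
`Σ_k ⟨k⟩^{2(s+1)} |w_k|²/(γ² + α²k⁶) ≤ 2 α^{−2/3} γ^{−4/3} Σ_k ⟨k⟩^{2s} |w_k|²`: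
the multiplier `M₂ : w_k ↦ w_k/(γ − iαk³)` gains one derivative with constant
`√2·α^{−1/3}·γ^{−2/3}`. -/
theorem M2_gain_one_derivative (α γ s : ℝ) (hα : α ∈ Set.Ioc (0 : ℝ) 1) (hγ : 0 < γ)
    (w : ℤ → ℂ) (h0 : w 0 = 0)
    (hw : Summable (fun k : ℤ => jb (k : ℝ) ^ (2 * s) * ‖w k‖^2)) :
    Summable (fun k : ℤ => jb (k : ℝ) ^ (2 * (s + 1)) * ‖w k‖^2 / (γ^2 + α^2 * (k : ℝ)^6)) ∧
    (∑' k : ℤ, jb (k : ℝ) ^ (2 * (s + 1)) * ‖w k‖^2 / (γ^2 + α^2 * (k : ℝ)^6))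
      ≤ 2 * α ^ (-(2 : ℝ)/3) * γ ^ (-(4 : ℝ)/3) * ∑' k : ℤ, jb (k : ℝ) ^ (2 * s) * ‖w k‖^2 :=
  M2_gain_one_derivative_general α γ s hα.1 hγ w h0 hw
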